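/- Let $(x_n)_{n \geq 1}$ be a sequence in $[0,1)$ which is not equidistributed. Then its pair correlations are not asymptotically Poissonian: there exists a real $s > 0$ such that it is not the case that $\frac{1}{N}\#\{(m,n) : 1 \leq m,n \leq N,\ m \neq n,\ \|x_m - x_n\| \leq s/N\} \to 2s$ as $N \to \infty$. -/

import Mathlib

open Finset Filter

/-- Distance to the nearest integer. -/
noncomputable def distToInt (t : ℝ) : ℝ := |t - round t|

/-!
Contrapositively, suppose that the number of pairs at distance at most `d / N` is eventually at most
`(2 * d + C) * N`, for every positive integer `d`. Rescale the points by `N` and count how many of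
them have an integer part in each block of `K` consecutive integers. These counts have mean about
`K`. Two points share one block for every `d ≤ K` exceeding the distance of their integer parts, so
the pair bounds control the second moment, and the variance per block is only `O(K)` rather than
`K ^ 2`. By Cauchy–Schwarz the relative discrepancy of any interval is `O(1 / √K)`, and `K` is
arbitrary. This bounds the frequency of an interval from above; the lower bound follows from the
upper bounds for the two complementary intervals.
-/

section DoubleCounting

variable {ι α : Type*} [DecidableEq α]

lemma sum_card_filter_mem (S : Finset ι) (T : Finset α) (W : ι → Finset α) :
    ∑ t ∈ T, #{i ∈ S | t ∈ W i} = ∑ i ∈ S, #(T ∩ W i) := by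
  simp only [← filter_mem_eq_inter]
  exact sum_card_bipartiteAbove_eq_sum_card_bipartiteBelow _

lemma sum_card_filter_mem_sq_le (S : Finset ι) (T : Finset α) (W : ι → Finset α) :
    ∑ t ∈ T, #{i ∈ S | t ∈ W i} ^ 2 ≤ ∑ p ∈ S ×ˢ S, #(W p.1 ∩ W p.2) :=
  calc ∑ t ∈ T, #{i ∈ S | t ∈ W i} ^ 2
      = ∑ t ∈ T, #{p ∈ S ×ˢ S | t ∈ W p.1 ∩ W p.2} := by
        simp only [sq, ← card_product, ← filter_product, mem_inter]
    _ = ∑ p ∈ S ×ˢ S, #(T ∩ (W p.1 ∩ W p.2)) :=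
        sum_card_filter_mem _ _ fun p : ι × ι => W p.1 ∩ W p.2
    _ ≤ ∑ p ∈ S ×ˢ S, #(W p.1 ∩ W p.2) :=
        sum_le_sum fun _ _ => card_le_card inter_subset_right

end DoubleCounting

lemma sum_le_card_mul_add_sqrt {α : Type*} (T : Finset α) (f : α → ℝ) (c : ℝ) :
    ∑ t ∈ T, f t ≤ #T * c + √(#T * ∑ t ∈ T, (f t - c) ^ 2) := by
  have hdev : ∑ t ∈ T, (f t - c) ≤ √(#T * ∑ t ∈ T, (f t - c) ^ 2) :=
    Real.le_sqrt_of_sq_le sq_sum_le_card_mul_sum_sq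
  rw [sum_sub_distrib, sum_const, nsmul_eq_mul] at hdev
  linarith

lemma sum_Icc_two_mul_add (C : ℝ) (K : ℕ) :
    ∑ d ∈ Icc 1 K, (2 * (d : ℝ) + C) = K ^ 2 + (C + 1) * K := by
  induction K with
  | zero => simp
  | succ K ih =>
    rw [sum_Icc_succ_top (by lia), ih]
    push_cast
    ring

section Window

/-- The block of `K` consecutive integers starting at `⌊u⌋`. An integer `t` belongs to it exactly
when `u ∈ [t - K + 1, t + 1)`, so that counting the points whose window contains `t` amounts to
counting the points in an interval of length `K`. -/
noncomputable def window (K : ℕ) (u : ℝ) : Finset ℤ := Ico ⌊u⌋ (⌊u⌋ + K)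

lemma card_window (K : ℕ) (u : ℝ) : #(window K u) = K := by
  simp [window]

lemma window_subset_Ico (K : ℕ) {u α β : ℝ} (hu : u ∈ Set.Icc α β) :
    window K u ⊆ Ico ⌊α⌋ (⌊β⌋ + K) :=
  Ico_subset_Ico (Int.floor_mono hu.1) (by gcongr; exact hu.2)

lemma card_Ico_floor_le (K : ℕ) {α β : ℝ} (hαβ : α ≤ β) :
    (#(Ico ⌊α⌋ (⌊β⌋ + K)) : ℝ) ≤ β - α + 1 + K := by
  have hfloor : ⌊α⌋ ≤ ⌊β⌋ := Int.floor_mono hαβ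
  have hcard : (#(Ico ⌊α⌋ (⌊β⌋ + K)) : ℤ) = ⌊β⌋ + K - ⌊α⌋ :=
    Int.card_Ico_of_le _ _ (by lia)
  have hcard' : (#(Ico ⌊α⌋ (⌊β⌋ + K)) : ℝ) = ⌊β⌋ + K - ⌊α⌋ := by exact_mod_cast hcard
  linarith [Int.floor_le β, Int.lt_floor_add_one α]

lemma card_Ico_zero_natCast_add_natCast (m n : ℕ) : #(Ico (0 : ℤ) (m + n)) = m + n := by
  rw [Int.card_Ico]
  lia

lemma abs_sub_lt_abs_floor_sub_floor_add_one (u v : ℝ) : |u - v| < |(⌊u⌋ - ⌊v⌋ : ℤ)| + 1 := by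
  have hfract : |Int.fract u - Int.fract v| < 1 :=
    abs_sub_lt_of_nonneg_of_lt (Int.fract_nonneg u) (Int.fract_lt_one u) (Int.fract_nonneg v)
      (Int.fract_lt_one v)
  calc |u - v| = |((⌊u⌋ - ⌊v⌋ : ℤ) : ℝ) + (Int.fract u - Int.fract v)| := by
        rw [Int.fract, Int.fract]
        push_cast
        ring_nf
    _ ≤ |((⌊u⌋ - ⌊v⌋ : ℤ) : ℝ)| + |Int.fract u - Int.fract v| := abs_add_le _ _
    _ < |(⌊u⌋ - ⌊v⌋ : ℤ)| + 1 := by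
        push_cast
        gcongr

lemma card_window_inter_le (K : ℕ) (u v : ℝ) :
    #(window K u ∩ window K v) ≤ #{d ∈ Icc 1 K | |u - v| ≤ (d : ℕ)} := by
  calc #(window K u ∩ window K v) = #(Ioc (⌊u⌋ - ⌊v⌋).natAbs K) := by
        rw [window, window, Ico_inter_Ico, Int.card_Ico, Nat.card_Ioc]
        lia
    _ ≤ #{d ∈ Icc 1 K | |u - v| ≤ (d : ℕ)} := by
        refine card_le_card fun d hd => ?_
        rw [mem_Ioc] at hd
        have hd' : |⌊u⌋ - ⌊v⌋| + 1 ≤ (d : ℤ) := by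
          rw [Int.abs_eq_natAbs]
          lia
        refine mem_filter.2 ⟨mem_Icc.2 ⟨by lia, hd.2⟩, ?_⟩
        exact (abs_sub_lt_abs_floor_sub_floor_add_one u v).le.trans (by exact_mod_cast hd')

end Window

section WindowCount

variable {ι : Type*} (S : Finset ι) (u : ι → ℝ) (K : ℕ)

/-- The number of points `u i`, `i ∈ S`, whose window of length `K` contains `t`. These are
the local counts whose variance the pair correlations control. -/
noncomputable def windowCount (t : ℤ) : ℕ := #{i ∈ S | t ∈ window K (u i)}

lemma sum_windowCount_sq_le (T : Finset ℤ) :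
    ∑ t ∈ T, windowCount S u K t ^ 2 ≤
      #S * K + ∑ d ∈ Icc 1 K, #{p ∈ S.offDiag | |u p.1 - u p.2| ≤ (d : ℕ)} := by
  classical
  calc ∑ t ∈ T, windowCount S u K t ^ 2
      ≤ ∑ p ∈ S ×ˢ S, #(window K (u p.1) ∩ window K (u p.2)) :=
        sum_card_filter_mem_sq_le S T fun i => window K (u i)
    _ = #S * K + ∑ p ∈ S.offDiag, #(window K (u p.1) ∩ window K (u p.2)) := by
        rw [← diag_union_offDiag, sum_union S.disjoint_diag_offDiag, sum_diag]
        simp only [inter_self, card_window, sum_const, smul_eq_mul]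
    _ ≤ #S * K + ∑ p ∈ S.offDiag, #{d ∈ Icc 1 K | |u p.1 - u p.2| ≤ (d : ℕ)} := by
        gcongr
        exact card_window_inter_le _ _ _
    _ = #S * K + ∑ d ∈ Icc 1 K, #{p ∈ S.offDiag | |u p.1 - u p.2| ≤ (d : ℕ)} := by
        congr 1
        exact sum_card_bipartiteAbove_eq_sum_card_bipartiteBelow _

variable {S u K}

lemma sum_windowCount {T : Finset ℤ} (hT : ∀ i ∈ S, window K (u i) ⊆ T) :
    ∑ t ∈ T, windowCount S u K t = #S * K := by
  calc ∑ t ∈ T, windowCount S u K t = ∑ i ∈ S, #(T ∩ window K (u i)) :=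
        sum_card_filter_mem S T fun i => window K (u i)
    _ = ∑ _ ∈ S, K := sum_congr rfl fun i hi => by rw [inter_eq_right.2 (hT i hi), card_window]
    _ = #S * K := by rw [sum_const, smul_eq_mul]

lemma sum_windowCount_sub_sq_le {C : ℝ} (hu : ∀ i ∈ S, u i ∈ Set.Icc (0 : ℝ) #S)
    (hpair : ∀ d ∈ Icc 1 K, (#{p ∈ S.offDiag | |u p.1 - u p.2| ≤ d} : ℝ) ≤ (2 * d + C) * #S) :
    ∑ t ∈ Ico (0 : ℤ) (#S + K), ((windowCount S u K t : ℝ) - K) ^ 2 ≤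
      (C + 2) * #S * K + K ^ 3 := by
  set U := Ico (0 : ℤ) (#S + K)
  have hcard : (#U : ℝ) = #S + K := by exact_mod_cast card_Ico_zero_natCast_add_natCast #S K
  have hfirst : ∑ t ∈ U, (windowCount S u K t : ℝ) = #S * K := by
    exact_mod_cast sum_windowCount fun i hi => by simpa using window_subset_Ico K (hu i hi)
  have hsecond : ∑ t ∈ U, (windowCount S u K t : ℝ) ^ 2 ≤
      #S * K + (K ^ 2 + (C + 1) * K) * #S :=
    calc ∑ t ∈ U, (windowCount S u K t : ℝ) ^ 2
        ≤ #S * K + ∑ d ∈ Icc 1 K, (#{p ∈ S.offDiag | |u p.1 - u p.2| ≤ d} : ℝ) := by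
          exact_mod_cast sum_windowCount_sq_le S u K U
      _ ≤ #S * K + ∑ d ∈ Icc 1 K, (2 * (d : ℝ) + C) * #S := by
          gcongr with d hd
          exact hpair d hd
      _ = #S * K + (K ^ 2 + (C + 1) * K) * #S := by
          rw [← sum_mul, sum_Icc_two_mul_add]
  calc ∑ t ∈ U, ((windowCount S u K t : ℝ) - K) ^ 2
      = ∑ t ∈ U, (windowCount S u K t : ℝ) ^ 2 - 2 * (∑ t ∈ U, (windowCount S u K t : ℝ)) * K
          + #U * K ^ 2 := by
        simp only [sub_sq, sum_add_distrib, sum_sub_distrib, sum_const, nsmul_eq_mul, ← sum_mul,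
          ← mul_sum]
    _ ≤ (C + 2) * #S * K + K ^ 3 := by
        rw [hfirst, hcard]
        linarith

lemma sqrt_card_mul_sum_windowCount_sub_sq_le {C : ℝ} (hK : 0 < K) (hKS : K ^ 2 ≤ #S)
    (hu : ∀ i ∈ S, u i ∈ Set.Icc (0 : ℝ) #S)
    (hpair : ∀ d ∈ Icc 1 K, (#{p ∈ S.offDiag | |u p.1 - u p.2| ≤ d} : ℝ) ≤ (2 * d + C) * #S)
    {T : Finset ℤ} (hT : T ⊆ Ico (0 : ℤ) (#S + K)) :
    √(#T * ∑ t ∈ T, ((windowCount S u K t : ℝ) - K) ^ 2) ≤ #S * K * √(2 * (C + 3) / K) := by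
  have hKS' : (K : ℝ) ^ 2 ≤ #S := by exact_mod_cast hKS
  have hcard : (#T : ℝ) ≤ 2 * #S := by
    have hTSK : #T ≤ #S + K := (card_le_card hT).trans_eq (card_Ico_zero_natCast_add_natCast _ _)
    have hKle : K ≤ #S := (Nat.le_self_pow two_ne_zero K).trans hKS
    exact_mod_cast (by lia : #T ≤ 2 * #S)
  have hsum : ∑ t ∈ T, ((windowCount S u K t : ℝ) - K) ^ 2 ≤ (C + 3) * #S * K :=
    calc ∑ t ∈ T, ((windowCount S u K t : ℝ) - K) ^ 2
        ≤ ∑ t ∈ Ico (0 : ℤ) (#S + K), ((windowCount S u K t : ℝ) - K) ^ 2 :=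
          sum_le_sum_of_subset_of_nonneg hT fun _ _ _ => sq_nonneg _
      _ ≤ (C + 2) * #S * K + K ^ 3 := sum_windowCount_sub_sq_le hu hpair
      _ ≤ (C + 3) * #S * K := by nlinarith
  calc √(#T * ∑ t ∈ T, ((windowCount S u K t : ℝ) - K) ^ 2)
      ≤ √((2 * #S) * ((C + 3) * #S * K)) := by gcongr
    _ = √((#S * K) ^ 2 * (2 * (C + 3) / K)) := by
        congr 1
        field_simp
    _ = #S * K * √(2 * (C + 3) / K) := by
        rw [Real.sqrt_mul (by positivity), Real.sqrt_sq (by positivity)]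

end WindowCount

/-- The number of `i ∈ S` with `x i ∈ [a, b]`. -/
noncomputable def intervalCount {ι : Type*} (S : Finset ι) (x : ι → ℝ) (a b : ℝ) : ℕ :=
  #{i ∈ S | x i ∈ Set.Icc a b}

/-- The pair correlation count of the points `x i`, `i ∈ S`: the number of ordered pairs of distinct
indices whose points are within `r` of each other modulo `1`. -/
noncomputable def pairCount {ι : Type*} (S : Finset ι) (x : ι → ℝ) (r : ℝ) : ℕ :=
  #{p ∈ S.offDiag | distToInt (x p.1 - x p.2) ≤ r}

lemma pairCount_eq_card_filter_product {ι : Type*} [DecidableEq ι] (S : Finset ι) (x : ι → ℝ)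
    (r : ℝ) :
    pairCount S x r = #{p ∈ S ×ˢ S | p.1 ≠ p.2 ∧ distToInt (x p.1 - x p.2) ≤ r} := by
  rw [pairCount]
  congr 1
  ext p
  simp only [mem_filter, mem_offDiag, mem_product, and_assoc]

section Discrepancy

variable {ι : Type*} {S : Finset ι} {x u : ι → ℝ} {K : ℕ} {C a b α β : ℝ}

lemma intervalCount_mul_le_sum_windowCount :
    intervalCount S u α β * K ≤ ∑ t ∈ Ico ⌊α⌋ (⌊β⌋ + K), windowCount S u K t := by
  have hwindow : ∀ i ∈ ({i ∈ S | u i ∈ Set.Icc α β} : Finset ι),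
      window K (u i) ⊆ Ico ⌊α⌋ (⌊β⌋ + K) := fun i hi =>
    window_subset_Ico K (mem_filter.1 hi).2
  rw [intervalCount, ← sum_windowCount hwindow]
  gcongr
  exact card_le_card (filter_subset_filter _ (filter_subset _ _))

lemma intervalCount_le_of_pairs_le (hK : 0 < K) (hKS : K ^ 2 ≤ #S)
    (hu : ∀ i ∈ S, u i ∈ Set.Icc (0 : ℝ) #S)
    (hpair : ∀ d ∈ Icc 1 K, (#{p ∈ S.offDiag | |u p.1 - u p.2| ≤ d} : ℝ) ≤ (2 * d + C) * #S)
    (hα : 0 ≤ α) (hαβ : α ≤ β) (hβ : β ≤ #S) :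
    (intervalCount S u α β : ℝ) ≤ β - α + #S * (2 / K + √(2 * (C + 3) / K)) := by
  set T := Ico ⌊α⌋ (⌊β⌋ + K)
  have hK₁ : (1 : ℝ) ≤ K := by exact_mod_cast hK
  have hK₀ : (0 : ℝ) < K := by linarith
  have hKS' : (K : ℝ) ^ 2 ≤ #S := by exact_mod_cast hKS
  have hT : T ⊆ Ico (0 : ℤ) (#S + K) :=
    Ico_subset_Ico (Int.floor_nonneg.2 hα) <| by
      gcongr
      exact (Int.floor_mono hβ).trans_eq (Int.floor_natCast _)
  have hedge : 1 + (K : ℝ) ≤ #S * (2 / K) := by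
    rw [mul_div_assoc', le_div_iff₀ hK₀]
    nlinarith
  refine le_of_mul_le_mul_right ?_ hK₀
  calc (intervalCount S u α β : ℝ) * K
      ≤ ∑ t ∈ T, (windowCount S u K t : ℝ) := by
        exact_mod_cast intervalCount_mul_le_sum_windowCount
    _ ≤ #T * K + √(#T * ∑ t ∈ T, ((windowCount S u K t : ℝ) - K) ^ 2) :=
        sum_le_card_mul_add_sqrt _ _ _
    _ ≤ (β - α + #S * (2 / K)) * K + #S * K * √(2 * (C + 3) / K) := by
        gcongr
        · linarith [card_Ico_floor_le K hαβ]
        · exact sqrt_card_mul_sum_windowCount_sub_sq_le hK hKS hu hpair hT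
    _ = (β - α + #S * (2 / K + √(2 * (C + 3) / K))) * K := by ring

lemma distToInt_le_abs (t : ℝ) : distToInt t ≤ |t| := by
  simpa [distToInt] using round_le t 0

lemma card_filter_abs_mul_sub_le_pairCount {c : ℝ} (hc : 0 < c) (r : ℝ) :
    #{p ∈ S.offDiag | |c * x p.1 - c * x p.2| ≤ r} ≤ pairCount S x (r / c) := by
  refine card_le_card (monotone_filter_right _ fun p _ hp => (distToInt_le_abs _).trans ?_)
  rwa [← mul_sub, abs_mul, abs_of_pos hc, ← le_div_iff₀' hc] at hp

lemma intervalCount_const_mul {c : ℝ} (hc : 0 < c) :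
    intervalCount S (fun i => c * x i) (c * a) (c * b) = intervalCount S x a b := by
  simp only [intervalCount, Set.mem_Icc, mul_le_mul_iff_right₀ hc]

theorem intervalCount_div_card_le_of_pairCount_le (hK : 0 < K) (hKS : K ^ 2 ≤ #S)
    (hx : ∀ i ∈ S, x i ∈ Set.Icc (0 : ℝ) 1)
    (hpair : ∀ d ∈ Icc 1 K, (pairCount S x (d / #S) : ℝ) ≤ (2 * d + C) * #S)
    (ha : 0 ≤ a) (hab : a ≤ b) (hb : b ≤ 1) :
    (intervalCount S x a b : ℝ) / #S ≤ b - a + (2 / K + √(2 * (C + 3) / K)) := by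
  have hS : (0 : ℝ) < #S := by exact_mod_cast (pow_pos hK 2).trans_le hKS
  have hscaled := intervalCount_le_of_pairs_le (u := fun i => #S * x i) hK hKS
    (fun i hi => ⟨mul_nonneg hS.le (hx i hi).1, mul_le_of_le_one_right hS.le (hx i hi).2⟩)
    (fun d hd => le_trans
      (by exact_mod_cast card_filter_abs_mul_sub_le_pairCount hS d) (hpair d hd))
    (mul_nonneg hS.le ha) (mul_le_mul_of_nonneg_left hab hS.le) (mul_le_of_le_one_right hS.le hb)
  rw [intervalCount_const_mul hS] at hscaled
  rw [div_le_iff₀ hS]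
  linarith

lemma card_le_intervalCount_add (hx : ∀ i ∈ S, x i ∈ Set.Icc (0 : ℝ) 1) (a b : ℝ) :
    #S ≤ intervalCount S x 0 a + intervalCount S x a b + intervalCount S x b 1 := by
  classical
  have hcover : S ⊆ {i ∈ S | x i ∈ Set.Icc 0 a} ∪ {i ∈ S | x i ∈ Set.Icc a b} ∪
      {i ∈ S | x i ∈ Set.Icc b 1} := by
    intro i hi
    have hxi := hx i hi
    simp only [mem_union, mem_filter, Set.mem_Icc] at hxi ⊢
    grind
  exact (card_le_card hcover).trans <| (card_union_le _ _).trans <|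
    Nat.add_le_add_right (card_union_le _ _) _

end Discrepancy

section Sequence

variable {x : ℕ → ℝ} {C a b : ℝ}

lemma eventually_intervalCount_div_le_of_pairCount_le (hx : ∀ n, x n ∈ Set.Icc (0 : ℝ) 1)
    (hpair : ∀ d : ℕ, 0 < d →
      ∀ᶠ N : ℕ in atTop, (pairCount (Icc 1 N) x (d / N) : ℝ) ≤ (2 * d + C) * N)
    (ha : 0 ≤ a) (hab : a ≤ b) (hb : b ≤ 1) {δ : ℝ} (hδ : 0 < δ) :
    ∀ᶠ N : ℕ in atTop, (intervalCount (Icc 1 N) x a b : ℝ) / N ≤ b - a + δ := by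
  have herror : Tendsto (fun K : ℕ => 2 / (K : ℝ) + √(2 * (C + 3) / K)) atTop (nhds 0) := by
    simpa using (tendsto_const_div_atTop_nhds_zero_nat 2).add
      (tendsto_const_div_atTop_nhds_zero_nat (2 * (C + 3))).sqrt
  obtain ⟨K, hKδ, hK⟩ := ((herror.eventually_lt_const hδ).and (eventually_gt_atTop 0)).exists
  have hpairs : ∀ᶠ N : ℕ in atTop,
      ∀ d ∈ Icc 1 K, (pairCount (Icc 1 N) x (d / N) : ℝ) ≤ (2 * d + C) * N :=
    (eventually_all_finset _).2 fun d hd => hpair d (mem_Icc.1 hd).1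
  filter_upwards [hpairs, eventually_ge_atTop (K ^ 2)] with N hN hKN
  have hcard : #(Icc 1 N) = N := by simp
  have hbound := intervalCount_div_card_le_of_pairCount_le (S := Icc 1 N) hK (by rwa [hcard])
    (fun n _ => hx n) (by rwa [hcard]) ha hab hb
  rw [hcard] at hbound
  linarith

theorem tendsto_intervalCount_div_of_pairCount_le (hx : ∀ n, x n ∈ Set.Icc (0 : ℝ) 1)
    (hpair : ∀ d : ℕ, 0 < d →
      ∀ᶠ N : ℕ in atTop, (pairCount (Icc 1 N) x (d / N) : ℝ) ≤ (2 * d + C) * N)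
    (ha : 0 ≤ a) (hab : a ≤ b) (hb : b ≤ 1) :
    Tendsto (fun N : ℕ => (intervalCount (Icc 1 N) x a b : ℝ) / N) atTop (nhds (b - a)) := by
  refine Metric.tendsto_nhds.2 fun δ hδ => ?_
  have hδ' : 0 < δ / 3 := by positivity
  filter_upwards [eventually_intervalCount_div_le_of_pairCount_le hx hpair ha hab hb hδ',
    eventually_intervalCount_div_le_of_pairCount_le hx hpair le_rfl ha (hab.trans hb) hδ',
    eventually_intervalCount_div_le_of_pairCount_le hx hpair (ha.trans hab) hb le_rfl hδ',
    eventually_gt_atTop 0] with N hmid hleft hright hN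
  have hN' : (0 : ℝ) < N := by exact_mod_cast hN
  have hcover : 1 ≤ (intervalCount (Icc 1 N) x 0 a : ℝ) / N + intervalCount (Icc 1 N) x a b / N +
      intervalCount (Icc 1 N) x b 1 / N := by
    rw [← add_div, ← add_div, one_le_div hN']
    have hcard := card_le_intervalCount_add (S := Icc 1 N) (fun n _ => hx n) a b
    rw [Nat.card_Icc, Nat.add_sub_cancel] at hcard
    exact_mod_cast hcard
  rw [Real.dist_eq, abs_lt]
  constructor <;> linarith

lemma eventually_pairCount_le_of_tendsto {s : ℝ}
    (h : Tendsto (fun N : ℕ => (pairCount (Icc 1 N) x (s / N) : ℝ) / N) atTop (nhds (2 * s))) :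
    ∀ᶠ N : ℕ in atTop, (pairCount (Icc 1 N) x (s / N) : ℝ) ≤ (2 * s + 1) * N := by
  filter_upwards [h.eventually_lt_const (lt_add_one _), eventually_gt_atTop 0] with N hlt hN
  exact ((div_lt_iff₀ (by exact_mod_cast hN)).1 hlt).le

end Sequence

theorem stmt_11 (x : ℕ → ℝ) (hx : ∀ n, x n ∈ Set.Ico (0 : ℝ) 1)
    (hne : ¬ (∀ a b : ℝ, 0 ≤ a → a ≤ b → b ≤ 1 →
      Tendsto (fun N : ℕ =>
        (((Finset.Icc 1 N).filter (fun n => x n ∈ Set.Icc a b)).card : ℝ) / N)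
        atTop (nhds (b - a)))) :
    ∃ s : ℝ, 0 < s ∧
      ¬ Tendsto (fun N : ℕ =>
        (((Finset.Icc 1 N ×ˢ Finset.Icc 1 N).filter (fun p : ℕ × ℕ =>
          p.1 ≠ p.2 ∧ distToInt (x p.1 - x p.2) ≤ s / N)).card : ℝ) / N)
        atTop (nhds (2 * s)) := by
  by_contra! hpoisson
  simp only [← pairCount_eq_card_filter_product] at hpoisson
  have hpair : ∀ d : ℕ, 0 < d →
      ∀ᶠ N : ℕ in atTop, (pairCount (Icc 1 N) x (d / N) : ℝ) ≤ (2 * d + 1) * N :=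
    fun d hd => eventually_pairCount_le_of_tendsto (hpoisson d (Nat.cast_pos.2 hd))
  exact hne fun a b ha hab hb =>
    tendsto_intervalCount_div_of_pairCount_le (fun n => Set.Ico_subset_Icc_self (hx n))
      hpair ha hab hb
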